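/- Let P ⊆ ℝ^d be a d-dimensional simplicial reflexive polytope and F a facet of P such that every lattice point of F is a vertex of F. Suppose |H_P(F,0)| = d. Then: (1) there is a map y ↦ z_y from 𝒱(F) to 𝒱(F) such that H_P(F,0) = {−y + z_y : y ∈ 𝒱(F)}, and 𝒱(F) is a ℤ-basis of the lattice ℤ^d; (2) for every vertex x ∈ H_P(F,−1) one has −x ∈ 𝒱(F). -/

import Mathlib

noncomputable section

/-- The standard inner product on `ℝ^d`. -/
def dotp {d : ℕ} (x y : Fin d → ℝ) : ℝ := ∑ i, x i * y i

/-- `x` is a point of the lattice `ℤ^d`. -/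
def IsLP {d : ℕ} (x : Fin d → ℝ) : Prop := ∀ i, ∃ n : ℤ, x i = (n : ℝ)

/-- A lattice polytope: convex hull of finitely many lattice points. -/
def IsLatticePolytope {d : ℕ} (P : Set (Fin d → ℝ)) : Prop :=
  ∃ V : Finset (Fin d → ℝ), (∀ v ∈ V, IsLP v) ∧ P = convexHull ℝ (V : Set (Fin d → ℝ))

/-- The dual polytope `P* = {x | ⟨x,y⟩ ≤ 1 ∀ y ∈ P}`. -/
def dualPolytope {d : ℕ} (P : Set (Fin d → ℝ)) : Set (Fin d → ℝ) :=
  {x | ∀ y ∈ P, dotp x y ≤ 1}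

/-- `P` is a reflexive polytope: a (`d`-dimensional) lattice polytope with `0` in its
interior whose dual is again a lattice polytope. -/
def IsReflexive {d : ℕ} (P : Set (Fin d → ℝ)) : Prop :=
  IsLatticePolytope P ∧ (0 : Fin d → ℝ) ∈ interior P ∧ IsLatticePolytope (dualPolytope P)

/-- `F` is a facet of `P` with (uniquely determined) outer normal `u`, normalized by
`⟨u, F⟩ = 1` (possible since `0` is in the interior of `P`). -/
def IsFacetNormal {d : ℕ} (P F : Set (Fin d → ℝ)) (u : Fin d → ℝ) : Prop :=
  F.Nonempty ∧ (∀ y ∈ P, dotp u y ≤ 1) ∧ F = {y ∈ P | dotp u y = 1} ∧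
    Module.finrank ℝ (vectorSpan ℝ F) = d - 1

/-- `F` is a facet of `P`. -/
def IsFacet {d : ℕ} (P F : Set (Fin d → ℝ)) : Prop := ∃ u, IsFacetNormal P F u

/-- `P` is simplicial: every facet has exactly `d` vertices. -/
def IsSimplicial {d : ℕ} (P : Set (Fin d → ℝ)) : Prop :=
  ∀ F, IsFacet P F → (Set.extremePoints ℝ F).ncard = d

/-- The set `B` is a `ℤ`-basis of the lattice `ℤ^d`. -/
def IsZBasis {d : ℕ} (B : Set (Fin d → ℝ)) : Prop :=
  ∃ b : Fin d → (Fin d → ℝ), Function.Injective b ∧ Set.range b = B ∧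
    (∀ i, IsLP (b i)) ∧ ∀ x : Fin d → ℝ, IsLP x → ∃ c : Fin d → ℤ, x = ∑ i, (c i : ℝ) • b i

/-- `dotp u` as a linear map. -/
def dl {d : ℕ} (u : Fin d → ℝ) : (Fin d → ℝ) →ₗ[ℝ] ℝ where
  toFun := dotp u
  map_add' x y := by simp [dotp, mul_add, Finset.sum_add_distrib]
  map_smul' c x := by
    simp only [dotp, Pi.smul_apply, smul_eq_mul, RingHom.id_apply, Finset.mul_sum]
    exact Finset.sum_congr rfl fun i _ => by ring

lemma dl_apply {d : ℕ} (u x : Fin d → ℝ) : dl u x = dotp u x := rfl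

lemma dotp_comm' {d : ℕ} (u x : Fin d → ℝ) : dotp u x = dotp x u := by
  simp [dotp, mul_comm]

lemma exists_vec {d : ℕ} (f : (Fin d → ℝ) →ₗ[ℝ] ℝ) : ∃ q, dl q = f := by
  refine ⟨fun i => f (Pi.single i 1), ?_⟩
  refine (Pi.basisFun ℝ (Fin d)).ext fun i => ?_
  rw [dl_apply]
  simp [dotp, Pi.single_apply]

lemma lp_dotp {d : ℕ} {u x : Fin d → ℝ} (hu : IsLP u) (hx : IsLP x) :
    ∃ n : ℤ, dotp u x = n := by
  choose a ha using hu
  choose b hb using hx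
  exact ⟨∑ i, a i * b i, by simp [dotp, ha, hb]⟩

lemma lp_add {d : ℕ} {u x : Fin d → ℝ} (hu : IsLP u) (hx : IsLP x) : IsLP (u + x) := by
  intro i
  obtain ⟨a, ha⟩ := hu i
  obtain ⟨b, hb⟩ := hx i
  exact ⟨a + b, by simp [ha, hb]⟩

lemma lp_ext_of_dual {d : ℕ} {u w : Fin d → ℝ} (B : Module.Basis (Fin d) ℝ (Fin d → ℝ))
    (h : ∀ i, dotp u (B i) = dotp w (B i)) : u = w := by
  have h1 : dl u = dl w := B.ext h
  funext i
  have h2 := LinearMap.congr_fun h1 (Pi.single i 1)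
  simpa [dl_apply, dotp, Pi.single_apply] using h2

section refl
variable {d : ℕ} {P : Set (Fin d → ℝ)}

lemma refl_compact (hP : IsReflexive P) : IsCompact P := by
  obtain ⟨⟨V, -, rfl⟩, -⟩ := hP
  exact V.finite_toSet.isCompact_convexHull ℝ

lemma refl_convex (hP : IsReflexive P) : Convex ℝ P := by
  obtain ⟨⟨V, -, rfl⟩, -⟩ := hP
  exact convex_convexHull ℝ _

lemma refl_ext_finite (hP : IsReflexive P) : (Set.extremePoints ℝ P).Finite := by
  obtain ⟨⟨V, -, rfl⟩, -⟩ := hP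
  exact V.finite_toSet.subset extremePoints_convexHull_subset

lemma refl_ext_lp (hP : IsReflexive P) {x : Fin d → ℝ} (hx : x ∈ Set.extremePoints ℝ P) :
    IsLP x := by
  obtain ⟨⟨V, hV, rfl⟩, -⟩ := hP
  exact hV _ (extremePoints_convexHull_subset hx)

lemma hull_ext {Q : Set (Fin d → ℝ)} (hc : IsCompact Q) (hv : Convex ℝ Q)
    (hf : (Set.extremePoints ℝ Q).Finite) : convexHull ℝ (Set.extremePoints ℝ Q) = Q := by
  have h := closure_convexHull_extremePoints hc hv
  rwa [(hf.isCompact_convexHull ℝ).isClosed.closure_eq] at h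

/-- linear functional bound on the extreme points extends to the polytope -/
lemma le_of_ext (hP : IsReflexive P) (f : (Fin d → ℝ) →ₗ[ℝ] ℝ) (r : ℝ)
    (h : ∀ x ∈ Set.extremePoints ℝ P, f x ≤ r) : ∀ x ∈ P, f x ≤ r := by
  have h1 := hull_ext (refl_compact hP) (refl_convex hP) (refl_ext_finite hP)
  intro x hx
  rw [← h1] at hx
  exact convexHull_min (fun y hy => h y hy) (convex_halfSpace_le f.isLinear r) hx

lemma exists_eps (hP : IsReflexive P) (v : Fin d → ℝ) :
    ∃ e : ℝ, 0 < e ∧ e • v ∈ P ∧ (-e) • v ∈ P := by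
  have h0 : P ∈ nhds (0 : Fin d → ℝ) := mem_interior_iff_mem_nhds.1 hP.2.1
  have hc : Filter.Tendsto (fun t : ℝ => t • v) (nhds 0) (nhds 0) := by
    have : Continuous (fun t : ℝ => t • v) := by fun_prop
    simpa using this.tendsto 0
  have h1 := hc h0
  obtain ⟨e, he, hb⟩ := Metric.mem_nhds_iff.1 (Filter.mem_map.1 h1)
  refine ⟨e / 2, by positivity, hb ?_, hb ?_⟩ <;>
    simp [abs_of_pos he] <;> linarith

lemma zero_not_ext (hP : IsReflexive P) {v : Fin d → ℝ} (hv : v ≠ 0) :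
    (0 : Fin d → ℝ) ∉ Set.extremePoints ℝ P := by
  intro h
  obtain ⟨e, he, h1, h2⟩ := exists_eps hP v
  have := (mem_extremePoints.1 h).2 _ h1 _ h2
    ⟨1/2, 1/2, by norm_num, by norm_num, by norm_num, by simp⟩
  simp [he.ne', hv] at this

lemma refl_bipolar (hP : IsReflexive P) {a : Fin d → ℝ} (ha : a ∉ P) :
    ∃ q, IsLP q ∧ (∀ y ∈ P, dotp q y ≤ 1) ∧ 1 < dotp q a := by
  obtain ⟨f, r, hf, hr⟩ := geometric_hahn_banach_closed_point (refl_convex hP)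
    (refl_compact hP).isClosed ha
  have hr0 : 0 < r := by simpa using hf 0 (interior_subset hP.2.1)
  obtain ⟨q, hq⟩ := exists_vec ((r⁻¹ : ℝ) • (f : (Fin d → ℝ) →ₗ[ℝ] ℝ))
  have hq' : ∀ y, dotp q y = r⁻¹ * f y := fun y => by
    rw [← dl_apply, hq]; simp
  have hqd : q ∈ dualPolytope P := by
    intro y hy
    rw [hq', inv_mul_le_iff₀ hr0]
    linarith [hf y hy]
  have hqa : 1 < dotp q a := by
    rw [hq', lt_inv_mul_iff₀ hr0]; linarith
  obtain ⟨W, hW, hWe⟩ := hP.2.2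
  by_contra hcon
  push Not at hcon
  have hsub : ∀ w ∈ (W : Set (Fin d → ℝ)), dl a w ≤ 1 := by
    intro w hw
    have hwd : w ∈ dualPolytope P := by rw [hWe]; exact subset_convexHull ℝ _ hw
    rw [dl_apply, dotp_comm']
    exact hcon w (hW w hw) hwd
  rw [hWe] at hqd
  have := convexHull_min (fun y hy => hsub y hy) (convex_halfSpace_le (dl a).isLinear 1) hqd
  have h2 : dotp a q ≤ 1 := this
  rw [dotp_comm'] at h2
  linarith

lemma normal_lp (hP : IsReflexive P) {u : Fin d → ℝ} (hu : ∀ y ∈ P, dotp u y ≤ 1)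
    (B : Module.Basis (Fin d) ℝ (Fin d → ℝ)) (hB : ∀ i, B i ∈ P) (h1 : ∀ i, dotp u (B i) = 1) :
    IsLP u := by
  obtain ⟨W, hW, hWe⟩ := hP.2.2
  have hud : u ∈ dualPolytope P := hu
  have huE : u ∈ Set.extremePoints ℝ (dualPolytope P) := by
    rw [mem_extremePoints]
    refine ⟨hud, fun x hx y hy hxy => ?_⟩
    obtain ⟨a, b, ha, hb, hab, rfl⟩ := hxy
    have key : ∀ i, dotp x (B i) = 1 ∧ dotp y (B i) = 1 := by
      intro i
      have e := h1 i
      rw [dotp_comm', ← dl_apply, map_add, map_smul, map_smul, dl_apply, dl_apply, dotp_comm',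
        dotp_comm' (B i) y] at e
      have hx1 := hx _ (hB i)
      have hy1 := hy _ (hB i)
      simp only [smul_eq_mul] at e
      constructor <;> nlinarith
    exact ⟨lp_ext_of_dual B fun i => by rw [(key i).1, h1], lp_ext_of_dual B fun i => by rw [(key i).2, h1]⟩
  rw [hWe] at huE
  exact hW _ (extremePoints_convexHull_subset huE)

/-- A facet of `P` in normal form: normal vector `u` and the basis `B` of vertices. -/
structure FB (P : Set (Fin d → ℝ)) (u : Fin d → ℝ)
    (B : Module.Basis (Fin d) ℝ (Fin d → ℝ)) : Prop where
  mem : ∀ i, B i ∈ Set.extremePoints ℝ P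
  one : ∀ i, dotp u (B i) = 1
  le : ∀ y ∈ P, dotp u y ≤ 1
  range : ∀ x ∈ Set.extremePoints ℝ P, dotp u x = 1 → ∃ i, x = B i

lemma face_ext {F : Set (Fin d → ℝ)} {u : Fin d → ℝ}
    (hle : ∀ y ∈ P, dotp u y ≤ 1) (hF : F = {y ∈ P | dotp u y = 1}) :
    Set.extremePoints ℝ F = {y ∈ Set.extremePoints ℝ P | dotp u y = 1} := by
  have hex : IsExtreme ℝ P F := by
    subst hF
    refine ⟨fun y hy => hy.1, ?_⟩
    rintro x hx y hy z hz ⟨a, b, ha, hb, hab, rfl⟩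
    refine ⟨hx, ?_⟩
    have e := hz.2
    rw [← dl_apply, map_add, map_smul, map_smul, dl_apply, dl_apply] at e
    simp only [smul_eq_mul] at e
    have := hle x hx
    have := hle y hy
    nlinarith
  rw [hex.extremePoints_eq]
  ext y
  subst hF
  constructor
  · rintro ⟨h1, h2⟩
    exact ⟨h2, h1.2⟩
  · rintro ⟨h1, h2⟩
    exact ⟨⟨h1.1, h2⟩, h1⟩

lemma facet_FB (hP : IsReflexive P) (hs : IsSimplicial P) {F : Set (Fin d → ℝ)} {u : Fin d → ℝ}
    (hF : IsFacetNormal P F u) :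
    ∃ B : Module.Basis (Fin d) ℝ (Fin d → ℝ), FB P u B ∧ Set.extremePoints ℝ F = Set.range B := by
  have hcard := hs F ⟨u, hF⟩
  obtain ⟨⟨f, hf⟩, hle, hFe, hdim⟩ := hF
  have hext := face_ext hle hFe
  have hfin : (Set.extremePoints ℝ F).Finite := by
    rw [hext]; exact (refl_ext_finite hP).subset fun y hy => hy.1
  have hcont : Continuous (dotp u) := (dl u).continuous_of_finiteDimensional
  have hFc : IsCompact F := by
    rw [hFe]
    exact (refl_compact hP).inter_right (isClosed_eq hcont continuous_const)
  have hFv : Convex ℝ F := by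
    rw [hFe]
    exact (refl_convex hP).inter (convex_hyperplane (dl u).isLinear 1)
  have hhull := hull_ext hFc hFv hfin
  have hspan : Submodule.span ℝ (Set.extremePoints ℝ F) = ⊤ := by
    have hsub : F ⊆ Submodule.span ℝ (Set.extremePoints ℝ F) := by
      conv_lhs => rw [← hhull]
      exact convexHull_min Submodule.subset_span (Submodule.convex _)
    have hvs : vectorSpan ℝ F ≤ Submodule.span ℝ (Set.extremePoints ℝ F) := by
      rw [vectorSpan_def, Submodule.span_le]
      rintro _ ⟨a, ha, b, hb, rfl⟩
      exact Submodule.sub_mem _ (hsub ha) (hsub hb)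
    have hker : vectorSpan ℝ F ≤ LinearMap.ker (dl u) := by
      rw [vectorSpan_def, Submodule.span_le]
      rintro _ ⟨a, ha, b, hb, rfl⟩
      rw [hFe] at ha hb
      change dl u (a - b) = 0
      rw [map_sub, dl_apply, dl_apply, ha.2, hb.2, sub_self]
    have hlt : vectorSpan ℝ F < Submodule.span ℝ (Set.extremePoints ℝ F) := by
      refine lt_of_le_of_ne hvs fun heq => ?_
      have h1 := hsub hf
      rw [← heq] at h1
      have h2 := hker h1
      have h3 := hf
      rw [hFe] at h3
      rw [LinearMap.mem_ker, dl_apply, h3.2] at h2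
      norm_num at h2
    have h4 := Submodule.finrank_lt_finrank_of_lt hlt
    apply Submodule.eq_top_of_finrank_eq
    have h5 := Submodule.finrank_le (Submodule.span ℝ (Set.extremePoints ℝ F))
    simp only [Module.finrank_fintype_fun_eq_card, Fintype.card_fin] at h5 ⊢
    omega
  have : Fintype (Set.extremePoints ℝ F) := hfin.fintype
  have hcard' : Fintype.card (Set.extremePoints ℝ F) = d := by
    rw [Set.ncard_eq_toFinset_card', Set.toFinset_card] at hcard
    exact hcard
  let e : Fin d ≃ Set.extremePoints ℝ F := (Fintype.equivFinOfCardEq hcard').symm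
  let b : Fin d → (Fin d → ℝ) := fun i => e i
  have hbr : Set.range b = Set.extremePoints ℝ F := by
    ext y
    constructor
    · rintro ⟨i, rfl⟩
      exact (e i).2
    · intro hy
      exact ⟨e.symm ⟨y, hy⟩, by simp [b]⟩
  have hli : LinearIndependent ℝ b :=
    linearIndependent_of_top_le_span_of_card_eq_finrank (by rw [hbr, hspan]) (by simp)
  let B := Module.Basis.mk hli (by rw [hbr, hspan])
  have hB : ⇑B = b := Module.Basis.coe_mk _ _
  refine ⟨B, ⟨?_, ?_, hle, ?_⟩, by rw [hB, hbr]⟩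
  · intro i
    have : b i ∈ Set.extremePoints ℝ F := (e i).2
    rw [hext] at this
    rw [hB]; exact this.1
  · intro i
    have : b i ∈ Set.extremePoints ℝ F := (e i).2
    rw [hext] at this
    rw [hB]; exact this.2
  · intro x hx hx1
    have : x ∈ Set.range b := by rw [hbr, hext]; exact ⟨hx, hx1⟩
    obtain ⟨i, hi⟩ := this
    exact ⟨i, by rw [hB, hi]⟩

/-- `d` linearly independent vertices on a supporting hyperplane make a facet. -/
lemma FB_of_basis (hP : IsReflexive P) (hs : IsSimplicial P) {u : Fin d → ℝ}
    {B : Module.Basis (Fin d) ℝ (Fin d → ℝ)} (hd : 0 < d)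
    (hmem : ∀ i, B i ∈ Set.extremePoints ℝ P) (hone : ∀ i, dotp u (B i) = 1)
    (hle : ∀ y ∈ P, dotp u y ≤ 1) : FB P u B := by
  refine ⟨hmem, hone, hle, ?_⟩
  set F := {y ∈ P | dotp u y = 1} with hF
  have hBF : Set.range B ⊆ F := by
    rintro _ ⟨i, rfl⟩
    exact ⟨(hmem i).1, hone i⟩
  have hfac : IsFacetNormal P F u := by
    refine ⟨⟨B ⟨0, hd⟩, hBF ⟨_, rfl⟩⟩, hle, hF, le_antisymm ?_ ?_⟩
    · have hker : vectorSpan ℝ F ≤ LinearMap.ker (dl u) := by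
        rw [vectorSpan_def, Submodule.span_le]
        rintro _ ⟨a, ha, b, hb, rfl⟩
        change dl u (a - b) = 0
        rw [map_sub, dl_apply, dl_apply, ha.2, hb.2, sub_self]
      have hne : vectorSpan ℝ F ≠ ⊤ := by
        intro h
        rw [h] at hker
        have := hker (Submodule.mem_top (x := B ⟨0, hd⟩))
        rw [LinearMap.mem_ker, dl_apply, hone] at this
        norm_num at this
      have := Submodule.finrank_lt hne
      simp only [Module.finrank_fintype_fun_eq_card, Fintype.card_fin] at this
      omega
    · have h1 := B.linearIndependent.affineIndependent.finrank_vectorSpan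
        (n := d - 1) (by simp; omega)
      rw [← h1]
      exact Submodule.finrank_mono (vectorSpan_mono ℝ hBF)
  have hcard := hs F ⟨u, hfac⟩
  have hext := face_ext hle hF
  have hfin : (Set.extremePoints ℝ F).Finite := by
    rw [hext]; exact (refl_ext_finite hP).subset fun y hy => hy.1
  have hsub : Set.range B ⊆ Set.extremePoints ℝ F := by
    rw [hext]
    rintro _ ⟨i, rfl⟩
    exact ⟨hmem i, hone i⟩
  have hrc : (Set.range B).ncard = d := by
    rw [← Set.image_univ, Set.ncard_image_of_injective _ B.injective]
    simp
  have heq := Set.eq_of_subset_of_ncard_le hsub (by rw [hcard, hrc]) hfin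
  intro x hx hx1
  have : x ∈ Set.range B := by rw [heq, hext]; exact ⟨hx, hx1⟩
  obtain ⟨i, hi⟩ := this
  exact ⟨i, hi.symm⟩

lemma FB.lp (hP : IsReflexive P) {u : Fin d → ℝ} {B : Module.Basis (Fin d) ℝ (Fin d → ℝ)}
    (h : FB P u B) : IsLP u :=
  normal_lp hP h.le B (fun i => (h.mem i).1) h.one

lemma dotp_sum (B : Module.Basis (Fin d) ℝ (Fin d → ℝ)) (q x : Fin d → ℝ) : dotp q x = ∑ i, B.coord i x * dotp q (B i) := by
  conv_lhs => rw [← B.sum_repr x, ← dl_apply, map_sum]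
  exact Finset.sum_congr rfl fun i _ => by rw [map_smul]; rfl

lemma FB.sum_one {u : Fin d → ℝ} {B : Module.Basis (Fin d) ℝ (Fin d → ℝ)}
    (h : FB P u B) (x : Fin d → ℝ) : dotp u x = ∑ i, B.coord i x := by
  rw [dotp_sum B u x]
  simp [h.one]

lemma coord_self (B : Module.Basis (Fin d) ℝ (Fin d → ℝ)) (i : Fin d) : B.coord i (B i) = 1 := by
  simp

lemma coord_ne (B : Module.Basis (Fin d) ℝ (Fin d → ℝ)) {i j : Fin d} (h : j ≠ i) :
    B.coord i (B j) = 0 := by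
  simp [h]

lemma update_basis (B : Module.Basis (Fin d) ℝ (Fin d → ℝ)) (i : Fin d) (n : Fin d → ℝ)
    (hn : B.coord i n ≠ 0) : ∃ B' : Module.Basis (Fin d) ℝ (Fin d → ℝ),
      B' i = n ∧ ∀ j, j ≠ i → B' j = B j := by
  have hli : LinearIndependent ℝ (Function.update B i n) := by
    rw [Fintype.linearIndependent_iff]
    intro g hg
    have hsplit : ∀ k, ∑ j, g j * B.coord k (Function.update B i n j) = 0 := by
      intro k
      have := congrArg (B.coord k) hg
      rw [map_sum, map_zero] at this
      simpa using this
    have hgi : g i = 0 := by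
      have := hsplit i
      rw [Finset.sum_eq_single i] at this
      · rw [Function.update_self] at this
        exact (mul_eq_zero.1 this).resolve_right hn
      · intro j _ hj
        rw [Function.update_of_ne hj, coord_ne B hj, mul_zero]
      · simp
    intro k
    by_cases hk : k = i
    · rw [hk, hgi]
    have := hsplit k
    rw [Finset.sum_eq_single k] at this
    · rw [Function.update_of_ne hk, coord_self, mul_one] at this
      exact this
    · intro j _ hj
      by_cases hji : j = i
      · rw [hji, hgi, zero_mul]
      · rw [Function.update_of_ne hji, coord_ne B hj, mul_zero]
    · simp
  have : Nonempty (Fin d) := ⟨i⟩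
  let B' := basisOfLinearIndependentOfCardEqFinrank hli (by simp)
  have hB' : ⇑B' = Function.update B i n := coe_basisOfLinearIndependentOfCardEqFinrank _ _
  exact ⟨B', by rw [hB']; simp, fun j hj => by rw [hB']; simp [hj]⟩

lemma neighbor (hP : IsReflexive P) (hs : IsSimplicial P) {u : Fin d → ℝ}
    {B : Module.Basis (Fin d) ℝ (Fin d → ℝ)} (h : FB P u B) (i : Fin d) :
    ∃ (u' : Fin d → ℝ) (B' : Module.Basis (Fin d) ℝ (Fin d → ℝ)) (s : ℝ), FB P u' B' ∧
      (∀ j, j ≠ i → B' j = B j) ∧ 1 ≤ s ∧ (∀ x, dotp u' x = dotp u x - s * B.coord i x) ∧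
      B.coord i (B' i) < 0 := by
  have hfin : {x ∈ Set.extremePoints ℝ P | B.coord i x < 0}.Finite :=
    (refl_ext_finite hP).subset fun y hy => hy.1
  have hne : {x ∈ Set.extremePoints ℝ P | B.coord i x < 0}.Nonempty := by
    by_contra hcon
    rw [Set.not_nonempty_iff_eq_empty] at hcon
    have hge : ∀ x ∈ Set.extremePoints ℝ P, (-B.coord i) x ≤ 0 := by
      intro x hx
      by_contra hx2
      have : x ∈ {x ∈ Set.extremePoints ℝ P | B.coord i x < 0} :=
        ⟨hx, by rw [LinearMap.neg_apply] at hx2; linarith⟩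
      rw [hcon] at this
      exact this
    obtain ⟨e, he, -, h2⟩ := exists_eps hP (B i)
    have := le_of_ext hP _ 0 hge _ h2
    rw [LinearMap.neg_apply, map_smul, coord_self] at this
    simp at this
    linarith
  obtain ⟨n, ⟨hnE, hn0⟩, hmin⟩ := Set.exists_min_image _
    (fun x => (1 - dotp u x) / (-B.coord i x)) hfin hne
  set s := (1 - dotp u n) / (-B.coord i n) with hsdef
  have hnone : dotp u n < 1 := by
    refine lt_of_le_of_ne (h.le n hnE.1) fun h1 => ?_
    obtain ⟨j, rfl⟩ := h.range n hnE h1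
    by_cases hj : j = i
    · rw [hj, coord_self] at hn0; linarith
    · rw [coord_ne B hj] at hn0; linarith
  have hs0 : 0 < s := div_pos (by linarith) (by linarith)
  obtain ⟨u', hu'⟩ := exists_vec (dl u - s • B.coord i)
  have hu : ∀ x, dotp u' x = dotp u x - s * B.coord i x := fun x => by
    rw [← dl_apply, hu']; rfl
  obtain ⟨B', hB'i, hB'⟩ := update_basis B i n hn0.ne
  have hle : ∀ y ∈ P, dl u' y ≤ 1 := by
    apply le_of_ext hP
    intro x hx
    rw [dl_apply, hu]
    by_cases hx0 : B.coord i x < 0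
    · have h1 := hmin x ⟨hx, hx0⟩
      change s ≤ _ at h1
      rw [le_div_iff₀ (by linarith)] at h1
      linarith
    · have := h.le x hx.1
      push Not at hx0
      nlinarith
  have hFB : FB P u' B' := by
    refine FB_of_basis hP hs i.pos ?_ ?_ hle
    · intro j
      by_cases hj : j = i
      · rw [hj, hB'i]; exact hnE
      · rw [hB' j hj]; exact h.mem j
    · intro j
      by_cases hj : j = i
      · rw [hj, hB'i, hu, hsdef]
        have h3 := div_mul_cancel₀ (1 - dotp u n) (show -B.coord i n ≠ 0 by linarith)
        linarith
      · rw [hB' j hj, hu, coord_ne B hj, h.one]; ring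
  refine ⟨u', B', s, hFB, hB', ?_, hu, by rw [hB'i]; exact hn0⟩
  obtain ⟨m, hm⟩ := lp_dotp (hFB.lp hP) (refl_ext_lp hP (h.mem i))
  rw [hu, h.one, coord_self] at hm
  have : (m : ℝ) < 1 := by linarith
  have : m < 1 := by exact_mod_cast this
  have : m ≤ 0 := by omega
  have : (m : ℝ) ≤ 0 := by exact_mod_cast this
  linarith

/-- If two lattice points of `P` are not both at height one for any dual lattice point,
their sum is in `P`. -/
lemma add_mem (hP : IsReflexive P) {a b : Fin d → ℝ} (ha : a ∈ P) (hb : b ∈ P)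
    (hla : IsLP a) (hlb : IsLP b)
    (h : ∀ q, (∀ y ∈ P, dotp q y ≤ 1) → dotp q a = 1 → dotp q b = 1 → False) : a + b ∈ P := by
  by_contra hcon
  obtain ⟨q, hq, hqd, hq1⟩ := refl_bipolar hP hcon
  rw [← dl_apply, map_add, dl_apply, dl_apply] at hq1
  have h1 := hqd a ha
  have h2 := hqd b hb
  obtain ⟨m, hm⟩ := lp_dotp hq hla
  obtain ⟨k, hk⟩ := lp_dotp hq hlb
  rw [hm] at h1
  rw [hk] at h2
  rw [hm, hk] at hq1
  have h1' : m ≤ 1 := by exact_mod_cast h1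
  have h2' : k ≤ 1 := by exact_mod_cast h2
  have h3' : 1 < m + k := by exact_mod_cast hq1
  refine h q hqd ?_ ?_
  · rw [hm]; have : m = 1 := by omega
    rw [this]; norm_num
  · rw [hk]; have : k = 1 := by omega
    rw [this]; norm_num

/-- At height zero all coordinates are at least `-1`. -/
lemma coord_ge (hP : IsReflexive P) (hs : IsSimplicial P) {u : Fin d → ℝ}
    {B : Module.Basis (Fin d) ℝ (Fin d → ℝ)} (h : FB P u B) {x : Fin d → ℝ}
    (hx : x ∈ P) (hx0 : dotp u x = 0) (i : Fin d) : -1 ≤ B.coord i x := by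
  obtain ⟨u', B', s, hFB, -, hs1, hu, -⟩ := neighbor hP hs h i
  have h1 := hFB.le x hx
  rw [hu, hx0] at h1
  by_contra hlt
  push Not at hlt
  nlinarith

end refl

theorem stmt15 {d : ℕ} (P : Set (Fin d → ℝ)) (hP : IsReflexive P) (hs : IsSimplicial P)
    (F : Set (Fin d → ℝ)) (u : Fin d → ℝ) (hF : IsFacetNormal P F u)
    (hlat : ∀ x ∈ F, IsLP x → x ∈ Set.extremePoints ℝ F)
    (hcard : {v ∈ Set.extremePoints ℝ P | dotp u v = 0}.ncard = d) :
    (∃ z : (Fin d → ℝ) → (Fin d → ℝ),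
      (∀ y ∈ Set.extremePoints ℝ F, z y ∈ Set.extremePoints ℝ F) ∧
      {v ∈ Set.extremePoints ℝ P | dotp u v = 0} =
        (fun y => -y + z y) '' Set.extremePoints ℝ F) ∧
    IsZBasis (Set.extremePoints ℝ F) ∧
    ∀ x ∈ Set.extremePoints ℝ P, dotp u x = -1 → -x ∈ Set.extremePoints ℝ F := by
  classical
  obtain ⟨B, hB, hFext⟩ := facet_FB hP hs hF
  have hFe := hF.2.2.1
  have hE0 : (0 : Fin d → ℝ) ∉ Set.extremePoints ℝ P := by
    obtain ⟨f, hf⟩ := hF.1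
    rw [hFe] at hf
    refine zero_not_ext hP (v := f) ?_
    rintro rfl
    have := hf.2
    rw [← dl_apply, map_zero] at this
    norm_num at this
  have huLP := hB.lp hP
  choose u' B' s hFB hB' hs1 hu hneg using neighbor hP hs hB
  set n : Fin d → (Fin d → ℝ) := fun i => B' i i with hn
  have hneg' : ∀ i, B.coord i (n i) < 0 := hneg
  have hnE : ∀ i, n i ∈ Set.extremePoints ℝ P := fun i => (hFB i).mem i
  have hrange : ∀ i, ∀ x ∈ Set.extremePoints ℝ P, dotp (u' i) x = 1 → dotp u x ≠ 1 → x = n i := by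
    intro i x hx h1 h2
    obtain ⟨j, hj⟩ := (hFB i).range x hx h1
    by_cases hji : j = i
    · rw [hj, hji]
    · exfalso
      apply h2
      rw [hj, hB' i j hji, hB.one]
  -- height zero vertices with a negative coordinate are neighbors
  have hzero : ∀ i, ∀ x ∈ Set.extremePoints ℝ P, dotp u x = 0 → B.coord i x < 0 → x = n i := by
    intro i x hx h0 hc
    refine hrange i x hx ?_ (by rw [h0]; norm_num)
    obtain ⟨m, hm⟩ := lp_dotp ((hFB i).lp hP) (refl_ext_lp hP hx)
    have h1 := (hFB i).le x hx.1
    have h2 : 0 < dotp (u' i) x := by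
      rw [hu, h0]
      nlinarith [hs1 i]
    rw [hm] at h1 h2 ⊢
    have h1' : m ≤ 1 := by exact_mod_cast h1
    have h2' : 0 < m := by exact_mod_cast h2
    have : m = 1 := by omega
    rw [this]; norm_num
  have hHsub : {v ∈ Set.extremePoints ℝ P | dotp u v = 0} ⊆ Set.range n := by
    rintro x ⟨hx, h0⟩
    have hex : ∃ i, B.coord i x < 0 := by
      by_contra hcon
      push Not at hcon
      rw [hB.sum_one] at h0
      have := (Finset.sum_eq_zero_iff_of_nonneg fun i _ => hcon i).1 h0
      apply hE0
      have hx0 : x = 0 := B.ext_elem fun i => by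
        have := this i (Finset.mem_univ i)
        rw [map_zero]
        exact this
      rwa [hx0] at hx
    obtain ⟨i, hi⟩ := hex
    exact ⟨i, (hzero i x hx h0 hi).symm⟩
  have hncle : (Set.range n).ncard ≤ d := by
    rw [← Set.image_univ]
    refine (Set.ncard_image_le Set.finite_univ).trans ?_
    simp
  have hHeq : {v ∈ Set.extremePoints ℝ P | dotp u v = 0} = Set.range n :=
    Set.eq_of_subset_of_ncard_le hHsub (by rw [hcard]; exact hncle) (Set.finite_range n)
  have hninj : Function.Injective n := by
    rw [← Set.injOn_univ]
    refine Set.injOn_of_ncard_image_eq ?_ Set.finite_univ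
    rw [Set.image_univ, ← hHeq, hcard]
    simp
  have hn0 : ∀ i, dotp u (n i) = 0 := fun i => by
    have : n i ∈ {v ∈ Set.extremePoints ℝ P | dotp u v = 0} := by rw [hHeq]; exact ⟨i, rfl⟩
    exact this.2
  have hnpos : ∀ i j, j ≠ i → 0 ≤ B.coord j (n i) := by
    intro i j hj
    by_contra hlt
    push Not at hlt
    exact hj (hninj (hzero j (n i) (hnE i) (hn0 i) hlt)).symm
  -- n i + B i is a vertex of F
  have hw : ∀ i, ∃ j, n i + B i = B j := by
    intro i
    have hmem : n i + B i ∈ P := by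
      refine add_mem hP (hnE i).1 (hB.mem i).1 (refl_ext_lp hP (hnE i))
        (refl_ext_lp hP (hB.mem i)) ?_
      intro q hq h1 h2
      have h3 : dotp q (n i) ≤ dotp u (n i) := by
        rw [dotp_sum B q, dotp_sum B u]
        refine Finset.sum_le_sum fun j _ => ?_
        rw [hB.one]
        by_cases hj : j = i
        · rw [hj, h2]
        · exact mul_le_mul_of_nonneg_left (hq _ (hB.mem j).1) (hnpos i j hj)
      rw [h1, hn0] at h3
      norm_num at h3
    have hmF : n i + B i ∈ F := by
      rw [hFe]
      refine ⟨hmem, ?_⟩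
      rw [← dl_apply, map_add, dl_apply, dl_apply, hn0, hB.one, zero_add]
    have := hlat _ hmF (lp_add (refl_ext_lp hP (hnE i)) (refl_ext_lp hP (hB.mem i)))
    rw [hFext] at this
    obtain ⟨j, hj⟩ := this
    exact ⟨j, hj.symm⟩
  choose w hw using hw
  have hnw : ∀ i, n i = B (w i) - B i := fun i => eq_sub_of_add_eq (hw i)
  have hwne : ∀ i, w i ≠ i := by
    intro i h
    have h1 := hneg' i
    rw [hnw, h, sub_self, map_zero] at h1
    exact lt_irrefl _ h1
  have hci : ∀ i, B.coord i (n i) = -1 := by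
    intro i
    rw [hnw, map_sub, coord_ne B (hwne i), coord_self]; norm_num
  have hseq : ∀ i, s i = 1 := by
    intro i
    have h1 : dotp (u' i) (n i) = 1 := (hFB i).one i
    rw [hu, hn0, hci] at h1
    linarith
  have hu1 : ∀ i x, dotp (u' i) x = dotp u x - B.coord i x := fun i x => by
    rw [hu, hseq, one_mul]
  have hint : ∀ i x, IsLP x → ∃ m : ℤ, B.coord i x = m := by
    intro i x hx
    obtain ⟨a, ha⟩ := lp_dotp huLP hx
    obtain ⟨b, hb⟩ := lp_dotp ((hFB i).lp hP) hx
    rw [hu1, ha] at hb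
    exact ⟨a - b, by push_cast; linarith⟩
  refine ⟨?_, ?_, ?_⟩
  · refine ⟨fun y => if h : ∃ i, B i = y then B (w h.choose) else y, ?_, ?_⟩
    · intro y hy
      rw [hFext] at hy ⊢
      have hy' : ∃ i, B i = y := hy
      simp only [dif_pos hy']
      exact ⟨_, rfl⟩
    · rw [hHeq, hFext, ← Set.range_comp]
      congr 1
      funext i
      have hi : ∃ j, B j = B i := ⟨i, rfl⟩
      have hch : hi.choose = i := B.injective hi.choose_spec
      simp only [Function.comp_apply, dif_pos hi, hch]
      rw [hnw]; abel
  · refine ⟨B, B.injective, hFext.symm, fun i => refl_ext_lp hP (hB.mem i), fun x hx => ?_⟩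
    choose c hc using fun i => hint i x hx
    refine ⟨c, ?_⟩
    conv_lhs => rw [← B.sum_repr x]
    exact Finset.sum_congr rfl fun i _ => by rw [← hc i]; rfl
  · intro x hx hx1
    have hlp := refl_ext_lp hP hx
    choose c hc using fun i => hint i x hlp
    have hcge : ∀ i, -1 ≤ c i := by
      intro i
      have h1 := (hFB i).le x hx.1
      have hne2 : dotp (u' i) x ≠ 1 := by
        intro h2
        have h3 := hrange i x hx h2 (by rw [hx1]; norm_num)
        rw [h3, hn0] at hx1
        norm_num at hx1
      have h2 := lt_of_le_of_ne h1 hne2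
      rw [hu1, hx1, hc] at h2
      have h3 : -2 < (c i : ℝ) := by linarith
      have : -2 < c i := by exact_mod_cast h3
      omega
    have hsum : ∑ i, c i = -1 := by
      have h1 := hB.sum_one x
      rw [hx1] at h1
      simp only [hc] at h1
      exact_mod_cast h1.symm
    obtain ⟨v, hv⟩ : ∃ v, c v < 0 := by
      by_contra hcon
      push Not at hcon
      have := Finset.sum_nonneg (s := Finset.univ) fun i _ => hcon i
      omega
    have hcv : c v = -1 := by have := hcge v; omega
    -- w y is not v when both coordinates are -1
    have hwy : ∀ v y, c v = -1 → c y = -1 → w y ≠ v := by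
      intro v y hv hy h
      have hvy : v ≠ y := fun h' => hwne y (h.trans h')
      have h0 : dotp (u' y) x = 0 := by
        rw [hu1, hx1, hc, hy]; norm_num
      have hge := coord_ge hP hs (hFB y) hx.1 h0 v
      have heq : (B' y).coord v = B.coord v + B.coord y := by
        refine (B' y).ext fun j => ?_
        by_cases hj : j = y
        · rw [hj, coord_ne (B' y) hvy.symm, LinearMap.add_apply]
          change 0 = B.coord v (n y) + B.coord y (n y)
          rw [hci, hnw, h, map_sub, coord_self, coord_ne B hvy.symm]; norm_num
        · rw [LinearMap.add_apply]
          by_cases hjv : j = v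
          · rw [hjv, coord_self, hB' y v hvy, coord_self, coord_ne B hvy]; norm_num
          · rw [coord_ne (B' y) hjv, hB' y j hj, coord_ne B hj, coord_ne B hjv]; norm_num
      rw [heq, LinearMap.add_apply, hc, hc, hv, hy] at hge
      norm_num at hge
    have hother : ∀ y, y ≠ v → 0 ≤ c y := by
      intro y hyv
      by_contra hlt
      have hcy : c y = -1 := by have := hcge y; omega
      have hw1 := hwy v y hcv hcy
      have hw2 := hwy y v hcy hcv
      have heq : (B' y).coord v = B.coord v := by
        refine (B' y).ext fun j => ?_
        by_cases hj : j = y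
        · rw [hj, coord_ne (B' y) hyv]
          change 0 = B.coord v (n y)
          rw [hnw, map_sub, coord_ne B hw1, coord_ne B hyv, sub_zero]
        · by_cases hjv : j = v
          · rw [hjv, coord_self, hB' y v hyv.symm, coord_self]
          · rw [coord_ne (B' y) hjv, hB' y j hj, coord_ne B hjv]
      obtain ⟨u2, B2, t, hFB2, hB2, ht1, hu2, -⟩ := neighbor hP hs (hFB y) v
      simp only [heq] at hu2
      have ht : t = 1 := by
        have h1 := hFB2.le x hx.1
        rw [hu2, hu1, hx1, hc, hc, hcv, hcy] at h1
        push_cast at h1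
        linarith
      subst ht
      have hx2 : dotp u2 x = 1 := by
        rw [hu2, hu1, hx1, hc, hc, hcv, hcy]; push_cast; ring
      have hv2 : dotp u2 (n v) = 1 := by
        rw [hu2, hu1, hn0, hci, hnw, map_sub, coord_ne B hw2, coord_ne B hyv.symm]; ring
      have hgen : ∀ p ∈ Set.extremePoints ℝ P, dotp u2 p = 1 → dotp u p ≠ 1 → p ≠ n y →
          p = B2 v := by
        intro p hp h1 h2 h3
        obtain ⟨j, hj⟩ := hFB2.range p hp h1
        by_cases hjv : j = v
        · rw [hj, hjv]
        · rw [hB2 j hjv] at hj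
          by_cases hjy : j = y
          · exact absurd (by rw [hj, hjy]) h3
          · rw [hB' y j hjy] at hj
            exact absurd (by rw [hj, hB.one]) h2
      have e1 : x = B2 v := by
        refine hgen x hx hx2 (by rw [hx1]; norm_num) fun h => ?_
        rw [h, hn0] at hx1
        norm_num at hx1
      have e2 : n v = B2 v := by
        refine hgen _ (hnE v) hv2 (by rw [hn0]; norm_num) fun h => hyv (hninj h).symm
      rw [e1, ← e2, hn0] at hx1
      norm_num at hx1
    have hz : ∀ y, y ≠ v → c y = 0 := by
      rw [← Finset.add_sum_erase _ _ (Finset.mem_univ v), hcv] at hsum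
      have h0 : ∑ i ∈ Finset.univ.erase v, c i = 0 := by omega
      intro y hy
      exact (Finset.sum_eq_zero_iff_of_nonneg fun i hi => hother i (Finset.ne_of_mem_erase hi)).1
        h0 y (Finset.mem_erase.2 ⟨hy, Finset.mem_univ y⟩)
    rw [hFext]
    refine ⟨v, ?_⟩
    refine B.ext_elem fun i => ?_
    change B.coord i (B v) = B.coord i (-x)
    rw [map_neg, hc]
    by_cases hi : i = v
    · rw [hi, coord_self, hcv]; norm_num
    · rw [coord_ne B (Ne.symm hi), hz i hi]; norm_num
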